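/- Let q be a real number with 0 < q and q ≠ 1, let l₁, l₂, α₁, λ be real numbers and t₁, t₂ nonzero reals. Assume λ + α₁ = -N for some positive integer N (so (q^{λ+α₁};q)_n = 0 for all n > N and the series below is a finite sum). Then the function g(x) = x^{-α₁} · Σ_{n=0}^{N} (q^{1/2}/x)^n · (q^{λ+α₁};q)_n · Σ_{k=0}^{n} (q^{l₁}t₁)^k · (q^{l₂}t₂)^{n-k} / ((q;q)_k (q;q)_{n-k}) satisfies the variant of the confluent q-hypergeometric equation of type (2,0) for all x > 0. -/

import Mathlib

/-- The finite q-shifted factorial `(a;q)_n = ∏_{i=0}^{n-1} (1 - a q^i)`. -/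
noncomputable def qPoch (q a : ℝ) (n : ℕ) : ℝ :=
  ∏ i ∈ Finset.range n, (1 - a * q ^ i)

/-- The variant of the confluent q-hypergeometric equation of type (2,0) (for `x > 0`). -/
def confEq20 (q l₁ l₂ α₁ lam t₁ t₂ : ℝ) (g : ℝ → ℝ) : Prop :=
  ∀ x : ℝ, 0 < x →
    q ^ (-2 * lam - 1) * (1 - q ^ (-l₁ + 1/2) * t₁⁻¹ * x) * (1 - q ^ (-l₂ + 1/2) * t₂⁻¹ * x)
        * g (q * x)
    + g (x / q)
    - (q ^ (-α₁ - l₁ - l₂ - 2 * lam) * t₁⁻¹ * t₂⁻¹ * x ^ 2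
        - q ^ (-lam - 1/2) * (q ^ (-l₁) * t₁⁻¹ + q ^ (-l₂) * t₂⁻¹) * x
        + q ^ (-lam) * (1 + q⁻¹)) * g x = 0

/-!
With `a = q^l₁ t₁`, `b = q^l₂ t₂`, `u = q^(lam + α₁)` and `z = q^(1/2) x`, the equation maps
`x^(-α₁) (q^(1/2) / x)^n` to a common factor times `z^(-n)` times a quadratic polynomial in `z`.
The inner sums `c n` of the series are the coefficients of `e_q(a X) e_q(b X)`, where `e_q` is the
`q`-exponential series; its `q`-difference equation turns into the recurrence
`(1 - q^(n+2)) c (n+2) = (a + b) c (n+1) - a b c n`, which makes the images of the terms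
`(u;q)_n c n x^(-α₁) (q^(1/2) / x)^n` telescope. The sum over `n ≤ N` is then a multiple of
`(u;q)_(N+1)`, which vanishes because `u q^N = 1`.
-/

section RogersSzego

variable {q : ℝ}

lemma qPoch_succ (q a : ℝ) (n : ℕ) : qPoch q a (n + 1) = qPoch q a n * (1 - a * q ^ n) :=
  Finset.prod_range_succ _ n

lemma qPoch_self_ne_zero (hq : ¬IsOfFinOrder q) (n : ℕ) : qPoch q q n ≠ 0 := by
  refine Finset.prod_ne_zero_iff.2 fun i _ h ↦ hq ?_
  exact isOfFinOrder_iff_pow_eq_one.2 ⟨i + 1, i.succ_pos, by rw [pow_succ']; linarith⟩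

/-- The `q`-exponential series `e_q(a X) = ∑ (a X)^n / (q;q)_n`. -/
noncomputable def qExp (q a : ℝ) : PowerSeries ℝ :=
  PowerSeries.mk fun n ↦ a ^ n / qPoch q q n

lemma rescale_qExp (hq : ¬IsOfFinOrder q) (a : ℝ) :
    PowerSeries.rescale q (qExp q a) = (1 - PowerSeries.C a * PowerSeries.X) * qExp q a := by
  ext n
  rw [sub_mul, one_mul, map_sub, mul_assoc, PowerSeries.coeff_C_mul, PowerSeries.coeff_rescale]
  cases n with
  | zero => simp
  | succ n =>
    have hn := qPoch_self_ne_zero hq n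
    have hfactor : 1 - q * q ^ n ≠ 0 :=
      right_ne_zero_of_mul (qPoch_succ q q n ▸ qPoch_self_ne_zero hq (n + 1))
    simp only [PowerSeries.coeff_succ_X_mul, qExp, PowerSeries.coeff_mk, qPoch_succ]
    field_simp
    ring

/-- The homogeneous Rogers–Szegő polynomial `∑ k, [n choose k]_q a^k b^(n-k)` divided by
`(q;q)_n`; these are the inner sums of the series solution. -/
noncomputable def rogersSzegoCoeff (q a b : ℝ) (n : ℕ) : ℝ :=
  ∑ k ∈ Finset.range (n + 1), a ^ k * b ^ (n - k) / (qPoch q q k * qPoch q q (n - k))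

lemma coeff_qExp_mul_qExp (q a b : ℝ) (n : ℕ) :
    PowerSeries.coeff n (qExp q a * qExp q b) = rogersSzegoCoeff q a b n := by
  rw [PowerSeries.coeff_mul, Finset.Nat.sum_antidiagonal_eq_sum_range_succ_mk]
  simp only [qExp, PowerSeries.coeff_mk, div_mul_div_comm, rogersSzegoCoeff]

lemma rescale_qExp_mul_qExp (hq : ¬IsOfFinOrder q) (a b : ℝ) :
    PowerSeries.rescale q (qExp q a * qExp q b) = qExp q a * qExp q b
      - PowerSeries.C (a + b) * (PowerSeries.X * (qExp q a * qExp q b))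
      + PowerSeries.C (a * b) * (PowerSeries.X * (PowerSeries.X * (qExp q a * qExp q b))) := by
  rw [map_mul, rescale_qExp hq, rescale_qExp hq, map_add, map_mul]
  ring

lemma rogersSzegoCoeff_one (hq : ¬IsOfFinOrder q) (a b : ℝ) :
    (1 - q) * rogersSzegoCoeff q a b 1 = (a + b) * rogersSzegoCoeff q a b 0 := by
  have h := congrArg (PowerSeries.coeff 1) (rescale_qExp_mul_qExp hq a b)
  simp only [PowerSeries.coeff_rescale, map_add (PowerSeries.coeff 1), map_sub,
    PowerSeries.coeff_C_mul, PowerSeries.coeff_succ_X_mul, PowerSeries.coeff_zero_X_mul,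
    coeff_qExp_mul_qExp] at h
  linarith

lemma rogersSzegoCoeff_add_two (hq : ¬IsOfFinOrder q) (a b : ℝ) (n : ℕ) :
    (1 - q ^ (n + 2)) * rogersSzegoCoeff q a b (n + 2) =
      (a + b) * rogersSzegoCoeff q a b (n + 1) - a * b * rogersSzegoCoeff q a b n := by
  have h := congrArg (PowerSeries.coeff (n + 2)) (rescale_qExp_mul_qExp hq a b)
  simp only [PowerSeries.coeff_rescale, map_add (PowerSeries.coeff (n + 2)), map_sub,
    PowerSeries.coeff_C_mul, PowerSeries.coeff_succ_X_mul, coeff_qExp_mul_qExp] at h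
  linarith

/-- The quadratic polynomial in `z = q^(1/2) x` that multiplies `z^(-n)` in the image of
`x^(-α₁) (q^(1/2) / x)^n` under `confOp20`. -/
noncomputable def confSymbol (q u a b z : ℝ) (n : ℕ) : ℝ :=
  (1 - u * q ^ n) * (1 - u * q ^ (n + 1)) - (a⁻¹ + b⁻¹) * (1 - u * q ^ n) * z
    + (1 - q ^ n) * (a⁻¹ * b⁻¹) * z ^ 2

lemma sum_range_confSymbol {a b z : ℝ} (hq : ¬IsOfFinOrder q) (ha : a ≠ 0) (hb : b ≠ 0)
    (hz : z ≠ 0) (u : ℝ) (m : ℕ) :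
    ∑ n ∈ Finset.range (m + 1),
        qPoch q u n * rogersSzegoCoeff q a b n * (confSymbol q u a b z n / z ^ n) =
      qPoch q u (m + 1) / z ^ m * ((1 - u * q ^ (m + 1)) * rogersSzegoCoeff q a b m
        - (1 - q ^ (m + 1)) * (a⁻¹ * b⁻¹) * z * rogersSzegoCoeff q a b (m + 1)) := by
  induction m with
  | zero =>
    simp only [zero_add, Finset.sum_range_one, confSymbol, qPoch_succ, pow_zero, pow_one]
    field_simp
    linear_combination qPoch q u 0 * (1 - u) * z * rogersSzegoCoeff_one hq a b
  | succ m ih =>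
    rw [Finset.sum_range_succ, ih]
    simp only [confSymbol, qPoch_succ]
    field_simp
    linear_combination qPoch q u m * (1 - u * q ^ m) * (1 - u * q ^ (m + 1)) * z * z ^ m *
      rogersSzegoCoeff_add_two hq a b m

end RogersSzego

section Operator

variable {q x : ℝ}

/-- The left-hand side of `confEq20`, as a linear operator on functions. -/
noncomputable def confOp20 (q l₁ l₂ α₁ lam t₁ t₂ : ℝ) : (ℝ → ℝ) →ₗ[ℝ] (ℝ → ℝ) where
  toFun g x :=
    q ^ (-2 * lam - 1) * (1 - q ^ (-l₁ + 1/2) * t₁⁻¹ * x) * (1 - q ^ (-l₂ + 1/2) * t₂⁻¹ * x)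
        * g (q * x)
    + g (x / q)
    - (q ^ (-α₁ - l₁ - l₂ - 2 * lam) * t₁⁻¹ * t₂⁻¹ * x ^ 2
        - q ^ (-lam - 1/2) * (q ^ (-l₁) * t₁⁻¹ + q ^ (-l₂) * t₂⁻¹) * x
        + q ^ (-lam) * (1 + q⁻¹)) * g x
  map_add' g h := by ext x; simp only [Pi.add_apply]; ring
  map_smul' c g := by ext x; simp only [Pi.smul_apply, smul_eq_mul, RingHom.id_apply]; ring

lemma confEq20_iff_confOp20 {l₁ l₂ α₁ lam t₁ t₂ : ℝ} {g : ℝ → ℝ} :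
    confEq20 q l₁ l₂ α₁ lam t₁ t₂ g ↔ ∀ x, 0 < x → confOp20 q l₁ l₂ α₁ lam t₁ t₂ g x = 0 :=
  Iff.rfl

/-- The function `x^(-α) (q^(1/2) / x)^n` of which the series solution is a combination. -/
noncomputable def confMonomial (q α : ℝ) (n : ℕ) (x : ℝ) : ℝ :=
  x ^ (-α) * (q ^ (1/2 : ℝ) / x) ^ n

lemma confMonomial_mul_left (hq : 0 < q) (hx : 0 ≤ x) (α : ℝ) (n : ℕ) :
    confMonomial q α n (q * x) = (q ^ α * q ^ n)⁻¹ * confMonomial q α n x := by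
  rw [confMonomial, confMonomial, Real.mul_rpow hq.le hx, Real.rpow_neg hq.le,
    mul_comm q x, ← div_div, div_pow _ q]
  field_simp

lemma confMonomial_div (hq : 0 < q) (hx : 0 ≤ x) (α : ℝ) (n : ℕ) :
    confMonomial q α n (x / q) = q ^ α * q ^ n * confMonomial q α n x := by
  rw [confMonomial, confMonomial, Real.div_rpow hx hq.le, Real.rpow_neg hq.le,
    div_div_eq_mul_div, mul_div_right_comm, mul_pow]
  field_simp

-- Here `p = q ^ lam` and `r = q ^ α₁`; the factors `(r * q ^ n)⁻¹` and `r * q ^ n` are the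
-- eigenvalues of the dilations `x ↦ q * x` and `x ↦ x / q` on `confMonomial q α₁ n`.
lemma dilation_eigenvalues_eq_confSymbol {p r : ℝ} (hq : q ≠ 0) (hp : p ≠ 0) (hr : r ≠ 0)
    (a b z : ℝ) (n : ℕ) :
    p⁻¹ ^ 2 * q⁻¹ * (1 - a⁻¹ * z) * (1 - b⁻¹ * z) * (r * q ^ n)⁻¹ + r * q ^ n
        - (p⁻¹ ^ 2 * r⁻¹ * q⁻¹ * a⁻¹ * b⁻¹ * z ^ 2 - p⁻¹ * q⁻¹ * (a⁻¹ + b⁻¹) * z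
          + p⁻¹ * (1 + q⁻¹)) =
      p⁻¹ ^ 2 * r⁻¹ * q⁻¹ * (confSymbol q (p * r) a b z n / q ^ n) := by
  simp only [confSymbol, pow_succ]
  field_simp
  ring

lemma confOp20_confMonomial (hq : 0 < q) (hx : 0 < x) (l₁ l₂ α₁ lam t₁ t₂ : ℝ) (n : ℕ) :
    confOp20 q l₁ l₂ α₁ lam t₁ t₂ (confMonomial q α₁ n) x =
      q ^ (-2 * lam - α₁ - 1) * x ^ (-α₁) *
        (confSymbol q (q ^ (lam + α₁)) (q ^ l₁ * t₁) (q ^ l₂ * t₂) (q ^ (1/2 : ℝ) * x) n /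
          (q ^ (1/2 : ℝ) * x) ^ n) := by
  have hsqrt : (q ^ (1/2 : ℝ)) ^ 2 = q := by
    rw [← Real.rpow_natCast, ← Real.rpow_mul hq.le]
    norm_num
  have hq_inv : q⁻¹ = (q ^ (1/2 : ℝ))⁻¹ ^ 2 := by rw [inv_pow, hsqrt]
  have hmonomial :
      confMonomial q α₁ n x = x ^ (-α₁) * (q ^ n / (q ^ (1/2 : ℝ) * x) ^ n) := by
    rw [confMonomial, ← div_pow]
    congr 2
    field_simp
    exact hsqrt
  have hsymbol := dilation_eigenvalues_eq_confSymbol hq.ne'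
    (Real.rpow_pos_of_pos hq lam).ne' (Real.rpow_pos_of_pos hq α₁).ne'
    (q ^ l₁ * t₁) (q ^ l₂ * t₂) (q ^ (1/2 : ℝ) * x) n
  calc
    _ = (q ^ lam)⁻¹ ^ 2 * (q ^ α₁)⁻¹ * q⁻¹ *
          (confSymbol q (q ^ lam * q ^ α₁) (q ^ l₁ * t₁) (q ^ l₂ * t₂) (q ^ (1/2 : ℝ) * x) n /
            q ^ n) * confMonomial q α₁ n x := by
      rw [← hsymbol]
      simp only [confOp20, LinearMap.coe_mk, AddHom.coe_mk, confMonomial_mul_left hq hx.le,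
        confMonomial_div hq hx.le, sub_eq_add_neg, neg_mul, two_mul, Real.rpow_add hq,
        Real.rpow_neg hq.le, Real.rpow_one, mul_inv, hq_inv]
      field_simp
    _ = _ := by
      rw [hmonomial, show -2 * lam - α₁ - 1 = -lam + -lam + -α₁ + -1 by ring]
      simp only [Real.rpow_add hq, Real.rpow_neg hq.le, Real.rpow_one]
      field_simp

lemma sum_smul_confMonomial (q α : ℝ) (s : Finset ℕ) (p c : ℕ → ℝ) :
    ∑ n ∈ s, (p n * c n) • confMonomial q α n =
      fun x ↦ x ^ (-α) * ∑ n ∈ s, (q ^ (1/2 : ℝ) / x) ^ n * p n * c n := by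
  ext x
  simp only [Finset.sum_apply, Pi.smul_apply, smul_eq_mul, confMonomial, Finset.mul_sum]
  exact Finset.sum_congr rfl fun n _ ↦ by ring

end Operator

theorem stmt16 (q l₁ l₂ α₁ lam t₁ t₂ : ℝ) (N : ℕ)
    (hq : 0 < q) (hq1 : q ≠ 1) (ht₁ : t₁ ≠ 0) (ht₂ : t₂ ≠ 0)
    (hN : 0 < N) (hNlam : lam + α₁ = -(N : ℝ)) :
    confEq20 q l₁ l₂ α₁ lam t₁ t₂ (fun x =>
      x ^ (-α₁) * ∑ n ∈ Finset.range (N + 1),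
        (q ^ (1/2 : ℝ) / x) ^ n * qPoch q (q ^ (lam + α₁)) n *
          ∑ k ∈ Finset.range (n + 1),
            (q ^ l₁ * t₁) ^ k * (q ^ l₂ * t₂) ^ (n - k) /
              (qPoch q q k * qPoch q q (n - k))) := by
  have hq_order : ¬IsOfFinOrder q := fun h ↦ hq1 (h.eq_one hq.le)
  have ha : q ^ l₁ * t₁ ≠ 0 := mul_ne_zero (by positivity) ht₁
  have hb : q ^ l₂ * t₂ ≠ 0 := mul_ne_zero (by positivity) ht₂
  have hvanish : qPoch q (q ^ (lam + α₁)) (N + 1) = 0 := by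
    rw [qPoch_succ, hNlam, Real.rpow_neg hq.le, Real.rpow_natCast,
      inv_mul_cancel₀ (by positivity), sub_self, mul_zero]
  simp only [← sum_smul_confMonomial]
  refine confEq20_iff_confOp20.2 fun x hx ↦ ?_
  have hz : q ^ (1/2 : ℝ) * x ≠ 0 := by positivity
  have hsum := sum_range_confSymbol hq_order ha hb hz (q ^ (lam + α₁)) N
  rw [hvanish, zero_div, zero_mul] at hsum
  simp only [map_sum, map_smul, Finset.sum_apply, Pi.smul_apply, smul_eq_mul,
    confOp20_confMonomial hq hx, mul_left_comm _ (q ^ (-2 * lam - α₁ - 1) * x ^ (-α₁))]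
  rw [← Finset.mul_sum]
  exact mul_eq_zero_of_right _ hsum
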